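/- Let d ≥ 1, β > 0, α > 0, η, ν > 0, and let Z₁, Z₂ ⊆ ℝ^d with Z₁ ∪ Z₂ = ℝ^d. Let g : ℝ^d → ℝ be continuous, v₁* ∈ Z₁ and v₂* ∈ Z₂, and suppose g(v) − g(v₁*) ≥ (η·‖v − v₁*‖)^{1/ν} − β for all v ∈ Z₁ and g(v) − g(v₂*) ≥ (η·‖v − v₂*‖)^{1/ν} − β for all v ∈ Z₂. For r > 0 set g_r := max{ sup_{v∈B_r(v₁*)} g(v) − g(v₁*), sup_{v∈B_r(v₂*)} g(v) − g(v₂*) }. Let ρ be a Borel probability measure on ℝ^d with ρ(B_r(v₁*)) > 0, ρ(B_r(v₂*)) > 0 and finite first moment. Then for each i ∈ {1,2} and all r > 0, q > β such that the sphere of radius q + g_r about v₁* meets the closure of Z₁ and the sphere of radius q + g_r about v₂* meets the closure of Z₂: ‖v_α(ρ) − vᵢ*‖ ≤ ‖v₁* − v₂*‖ + 2·(q + g_r)^ν/η + (e^{−α(q−β)} / min{ρ(B_r(v₁*)), ρ(B_r(v₂*))}) · ( ∫ ‖w − vᵢ*‖ dρ(w) + ‖v₁* − v₂*‖ ). -/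

import Mathlib

open MeasureTheory Metric

/-- If the weight `f` is, up to an error `(∫ f) * C`, concentrated on points within distance `K`
of `c`, then the `f`-weighted mean is close to `c`. -/
theorem norm_weightedMean_sub_le {E : Type*} [NormedAddCommGroup E] [NormedSpace ℝ E]
    [CompleteSpace E] [MeasurableSpace E] {ρ : Measure E} {f : E → ℝ} {c : E} {K C : ℝ}
    (hf : ∀ w, 0 ≤ f w) (hfi : Integrable f ρ) (hfw : Integrable (fun w => f w • w) ρ)
    (hpos : 0 < ∫ w, f w ∂ρ) (hmom : Integrable (fun w => ‖w - c‖) ρ)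
    (hle : ∀ w, f w * ‖w - c‖ ≤ f w * K + (∫ w, f w ∂ρ) * C * ‖w - c‖) :
    ‖(∫ w, f w ∂ρ)⁻¹ • (∫ w, f w • w ∂ρ) - c‖ ≤ K + C * ∫ w, ‖w - c‖ ∂ρ := by
  set D := ∫ w, f w ∂ρ with hD
  have hsub : D⁻¹ • (∫ w, f w • w ∂ρ) - c = D⁻¹ • ∫ w, f w • (w - c) ∂ρ := by
    simp_rw [smul_sub]
    rw [integral_sub hfw (hfi.smul_const c), integral_smul_const, ← hD, smul_sub,
      inv_smul_smul₀ hpos.ne']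
  have hint : ‖∫ w, f w • (w - c) ∂ρ‖ ≤ D * K + D * C * ∫ w, ‖w - c‖ ∂ρ := by
    calc ‖∫ w, f w • (w - c) ∂ρ‖
        ≤ ∫ w, (f w * K + D * C * ‖w - c‖) ∂ρ := by
          refine norm_integral_le_of_norm_le ((hfi.mul_const K).add (hmom.const_mul _))
            (Filter.Eventually.of_forall fun w => ?_)
          rw [norm_smul, Real.norm_of_nonneg (hf w)]
          exact hle w
      _ = D * K + D * C * ∫ w, ‖w - c‖ ∂ρ := by
          rw [integral_add (hfi.mul_const K) (hmom.const_mul _), integral_mul_const,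
            integral_const_mul]
  rw [hsub, norm_smul, Real.norm_of_nonneg (inv_nonneg.2 hpos.le), inv_mul_le_iff₀ hpos]
  linarith

/-- A function at most `M` on `s` has Gibbs partition function at least `exp (-α M) ρ(s)`. -/
theorem exp_mul_measure_le_integral_exp {E : Type*} [MeasurableSpace E] {ρ : Measure E}
    [IsFiniteMeasure ρ] {g : E → ℝ} {α M : ℝ} (hα : 0 ≤ α) {s : Set E} (hs : MeasurableSet s)
    (hint : Integrable (fun w => Real.exp (-α * g w)) ρ) (hM : ∀ w ∈ s, g w ≤ M) :
    Real.exp (-α * M) * (ρ s).toReal ≤ ∫ w, Real.exp (-α * g w) ∂ρ := by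
  calc Real.exp (-α * M) * (ρ s).toReal
      ≤ ∫ w in s, Real.exp (-α * g w) ∂ρ := by
        refine setIntegral_ge_of_const_le_real hs (measure_ne_top ρ s) (fun w hw => ?_)
          hint.integrableOn
        have := mul_le_mul_of_nonneg_left (hM w hw) hα
        exact Real.exp_le_exp.2 (by linarith)
    _ ≤ ∫ w, Real.exp (-α * g w) ∂ρ :=
        setIntegral_le_integral hint (Filter.Eventually.of_forall fun w => (Real.exp_pos _).le)

/-- Under inverse growth about `v`, a point is either within distance `(q + s) ^ ν / η` of `v`, or
its Gibbs weight is small compared with the partition function `D`. -/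
theorem norm_sub_le_or_exp_le {E : Type*} [NormedAddCommGroup E] {g : E → ℝ} {v w : E}
    {α β η ν q s p m D : ℝ} (hα : 0 ≤ α) (hη : 0 < η) (hν : 0 < ν) (hqs : 0 ≤ q + s)
    (hm : 0 < m) (hmp : m ≤ p)
    (hgrow : (η * ‖w - v‖) ^ ((1 : ℝ) / ν) - β ≤ g w - g v)
    (hD : Real.exp (-α * (g v + s)) * p ≤ D) :
    ‖w - v‖ ≤ (q + s) ^ ν / η ∨ Real.exp (-α * g w) ≤ D * (Real.exp (-α * (q - β)) / m) := by
  rcases le_or_gt ‖w - v‖ ((q + s) ^ ν / η) with h | h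
  · exact Or.inl h
  right
  rw [div_lt_iff₀' hη] at h
  have hlt : q + s < (η * ‖w - v‖) ^ ((1 : ℝ) / ν) := by
    rw [one_div]
    exact (Real.lt_rpow_inv_iff_of_pos hqs (by positivity) hν).2 h
  have hDm : Real.exp (-α * (g v + s)) * m ≤ D :=
    (mul_le_mul_of_nonneg_left hmp (Real.exp_pos _).le).trans hD
  have hgw : α * (g v + s + (q - β)) ≤ α * g w :=
    mul_le_mul_of_nonneg_left (by linarith) hα
  calc Real.exp (-α * g w)
      ≤ Real.exp (-α * (g v + s) + -α * (q - β)) := Real.exp_le_exp.2 (by linarith)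
    _ = Real.exp (-α * (g v + s)) * m * (Real.exp (-α * (q - β)) / m) := by
        rw [Real.exp_add]
        field_simp
    _ ≤ D * (Real.exp (-α * (q - β)) / m) := by gcongr

/-- Two-zone variant of the quantitative Laplace principle (Lemma `lem:9090`). -/
theorem stmt_12 {d : ℕ} (hd : 1 ≤ d)
    (β α η ν : ℝ) (hβ : 0 < β) (hα : 0 < α) (hη : 0 < η) (hν : 0 < ν)
    (Z1 Z2 : Set (EuclideanSpace ℝ (Fin d))) (hZ : Z1 ∪ Z2 = Set.univ)
    (g : EuclideanSpace ℝ (Fin d) → ℝ) (hg : Continuous g)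
    (v1 v2 : EuclideanSpace ℝ (Fin d)) (hv1 : v1 ∈ Z1) (hv2 : v2 ∈ Z2)
    (hgrow1 : ∀ v ∈ Z1, (η * ‖v - v1‖) ^ ((1:ℝ)/ν) - β ≤ g v - g v1)
    (hgrow2 : ∀ v ∈ Z2, (η * ‖v - v2‖) ^ ((1:ℝ)/ν) - β ≤ g v - g v2)
    (gr : ℝ → ℝ)
    (hgr : ∀ r, gr r = max (sSup (g '' Metric.closedBall v1 r) - g v1)
                          (sSup (g '' Metric.closedBall v2 r) - g v2))
    (ρ : Measure (EuclideanSpace ℝ (Fin d))) (hρ : IsProbabilityMeasure ρ)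
    (hmom : Integrable (fun w => ‖w‖) ρ)
    (vα : EuclideanSpace ℝ (Fin d))
    (hvα : vα = (∫ w, Real.exp (-α * g w) ∂ρ)⁻¹ • ∫ w, Real.exp (-α * g w) • w ∂ρ) :
    ∀ r > (0:ℝ), ∀ q > β,
      0 < ρ (Metric.closedBall v1 r) → 0 < ρ (Metric.closedBall v2 r) →
      (Metric.sphere v1 (q + gr r) ∩ closure Z1).Nonempty →
      (Metric.sphere v2 (q + gr r) ∩ closure Z2).Nonempty →
      (‖vα - v1‖
          ≤ ‖v1 - v2‖ + 2 * (q + gr r) ^ ν / η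
            + (Real.exp (-α * (q - β))
                / min (ρ (Metric.closedBall v1 r)).toReal
                      (ρ (Metric.closedBall v2 r)).toReal)
              * ((∫ w, ‖w - v1‖ ∂ρ) + ‖v1 - v2‖)) ∧
      (‖vα - v2‖
          ≤ ‖v1 - v2‖ + 2 * (q + gr r) ^ ν / η
            + (Real.exp (-α * (q - β))
                / min (ρ (Metric.closedBall v1 r)).toReal
                      (ρ (Metric.closedBall v2 r)).toReal)
              * ((∫ w, ‖w - v2‖ ∂ρ) + ‖v1 - v2‖)) := by
  intro r hr q hq hρ1 hρ2 _ _
  have hle (v x : EuclideanSpace ℝ (Fin d)) (hx : x ∈ closedBall v r) :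
      g x ≤ sSup (g '' closedBall v r) :=
    le_csSup ((isCompact_closedBall v r).image hg).bddAbove (Set.mem_image_of_mem g hx)
  have hs1 : sSup (g '' closedBall v1 r) - g v1 ≤ gr r := hgr r ▸ le_max_left _ _
  have hs2 : sSup (g '' closedBall v2 r) - g v2 ≤ gr r := hgr r ▸ le_max_right _ _
  have hgr0 : 0 ≤ gr r := by linarith [hle v1 v1 (mem_closedBall_self hr.le)]
  have hqs : 0 ≤ q + gr r := by linarith
  have hR : 0 ≤ (q + gr r) ^ ν / η := by positivity
  have hcover (w : EuclideanSpace ℝ (Fin d)) : w ∈ Z1 ∨ w ∈ Z2 := by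
    rw [← Set.mem_union, hZ]
    trivial
  have hlow (w : EuclideanSpace ℝ (Fin d)) : min (g v1) (g v2) - β ≤ g w := by
    rcases hcover w with h | h
    · have : 0 ≤ (η * ‖w - v1‖) ^ ((1 : ℝ) / ν) := by positivity
      linarith [hgrow1 w h, min_le_left (g v1) (g v2)]
    · have : 0 ≤ (η * ‖w - v2‖) ^ ((1 : ℝ) / ν) := by positivity
      linarith [hgrow2 w h, min_le_right (g v1) (g v2)]
  have hbound (w : EuclideanSpace ℝ (Fin d)) :
      ‖Real.exp (-α * g w)‖ ≤ Real.exp (-α * (min (g v1) (g v2) - β)) := by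
    have := mul_le_mul_of_nonneg_left (hlow w) hα.le
    rw [Real.norm_of_nonneg (Real.exp_pos _).le]
    exact Real.exp_le_exp.2 (by linarith)
  have hmeas : AEStronglyMeasurable (fun w => Real.exp (-α * g w)) ρ :=
    (Real.continuous_exp.comp (continuous_const.mul hg)).aestronglyMeasurable
  have hfi : Integrable (fun w => Real.exp (-α * g w)) ρ :=
    Integrable.of_bound hmeas _ (Filter.Eventually.of_forall hbound)
  have hid : Integrable (fun w : EuclideanSpace ℝ (Fin d) => w) ρ :=
    (integrable_norm_iff continuous_id.aestronglyMeasurable).1 hmom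
  have hfw : Integrable (fun w => Real.exp (-α * g w) • w) ρ :=
    hid.bdd_smul _ hmeas (Filter.Eventually.of_forall hbound)
  have hD1 := exp_mul_measure_le_integral_exp hα.le measurableSet_closedBall hfi
    (s := closedBall v1 r) (M := g v1 + gr r) fun w hw => by linarith [hle v1 w hw]
  have hD2 := exp_mul_measure_le_integral_exp hα.le measurableSet_closedBall hfi
    (s := closedBall v2 r) (M := g v2 + gr r) fun w hw => by linarith [hle v2 w hw]
  have hp1 := ENNReal.toReal_pos hρ1.ne' (measure_ne_top ρ _)
  have hp2 := ENNReal.toReal_pos hρ2.ne' (measure_ne_top ρ _)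
  have hm := lt_min hp1 hp2
  have hDpos : 0 < ∫ w, Real.exp (-α * g w) ∂ρ :=
    (mul_pos (Real.exp_pos _) hp1).trans_le hD1
  have hC : 0 ≤ Real.exp (-α * (q - β)) / min (ρ (closedBall v1 r)).toReal
      (ρ (closedBall v2 r)).toReal := by positivity
  have key (c : EuclideanSpace ℝ (Fin d)) (hc1 : ‖v1 - c‖ ≤ ‖v1 - v2‖)
      (hc2 : ‖v2 - c‖ ≤ ‖v1 - v2‖) :
      ‖vα - c‖ ≤ ‖v1 - v2‖ + 2 * (q + gr r) ^ ν / η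
        + (Real.exp (-α * (q - β)) / min (ρ (closedBall v1 r)).toReal
            (ρ (closedBall v2 r)).toReal) * ((∫ w, ‖w - c‖ ∂ρ) + ‖v1 - v2‖) := by
    have hmean := norm_weightedMean_sub_le (c := c) (K := ‖v1 - v2‖ + (q + gr r) ^ ν / η)
      (C := Real.exp (-α * (q - β)) / min (ρ (closedBall v1 r)).toReal
        (ρ (closedBall v2 r)).toReal)
      (fun w => (Real.exp_pos (-α * g w)).le) hfi hfw hDpos
      (hid.sub (integrable_const c)).norm fun w => by
        have hnear (v : EuclideanSpace ℝ (Fin d)) (hc : ‖v - c‖ ≤ ‖v1 - v2‖)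
            (h : ‖w - v‖ ≤ (q + gr r) ^ ν / η ∨ Real.exp (-α * g w) ≤
              (∫ w, Real.exp (-α * g w) ∂ρ) * (Real.exp (-α * (q - β)) /
                min (ρ (closedBall v1 r)).toReal (ρ (closedBall v2 r)).toReal)) :
            Real.exp (-α * g w) * ‖w - c‖ ≤
              Real.exp (-α * g w) * (‖v1 - v2‖ + (q + gr r) ^ ν / η) +
              (∫ w, Real.exp (-α * g w) ∂ρ) * (Real.exp (-α * (q - β)) /
                min (ρ (closedBall v1 r)).toReal (ρ (closedBall v2 r)).toReal) * ‖w - c‖ := by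
          rcases h with h | h
          · refine le_add_of_le_of_nonneg (mul_le_mul_of_nonneg_left ?_ (Real.exp_pos _).le)
              (by positivity)
            linarith [norm_sub_le_norm_sub_add_norm_sub w v c]
          · exact le_add_of_nonneg_of_le (by positivity)
              (mul_le_mul_of_nonneg_right h (norm_nonneg _))
        rcases hcover w with h | h
        · exact hnear v1 hc1 (norm_sub_le_or_exp_le hα.le hη hν hqs hm (min_le_left _ _)
            (hgrow1 w h) hD1)
        · exact hnear v2 hc2 (norm_sub_le_or_exp_le hα.le hη hν hqs hm (min_le_right _ _)
            (hgrow2 w h) hD2)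
    rw [← hvα] at hmean
    have hextra := mul_nonneg hC (norm_nonneg (v1 - v2))
    rw [mul_add, mul_div_assoc]
    linarith
  exact ⟨key v1 (by simp) (norm_sub_rev v2 v1).le, key v2 le_rfl (by simp)⟩
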